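/- Let ψ ∈ C_c^∞(ℝ²) and define φ ∈ C_c^∞(ℝ) by φ(x₁) := ψ(x₁,0). Then the derivative at 0 of the Hilbert transform of φ, namely Hφ'(0) = lim_{ε→0⁺} (1/π) ∫_{|t| ≥ ε} φ'(−t)/t dt, satisfies Hφ'(0) = −(1/4π) ∫_{S¹} |sin θ| · T(Δψ)(0,θ) dθ, where Δ = ∂_{x₁}² + ∂_{x₂}² is the Laplacian on ℝ². -/

import Mathlib

/-!
Let `A r = ∫₀^π sin θ ψ(r cos θ, r sin θ) dθ` and `B r = ψ(r, 0) + ψ(-r, 0)`. Since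
`sin'' = -sin`, two integrations by parts in `θ` turn the angular part of the polar Laplacian into
`B - A`, so the same weighted mean of `Δψ` is `A'' + A' / r + (B - A) / r ^ 2`, which equals
`W' + B' / r` for `W = A' + (A - B) / r`. As `A 0 = 2 ψ 0 = B 0`, `W` has the same limit at `0` from
both sides, so integrating over `ε ≤ |r|` and letting `ε → 0` gives
`lim ∫ B' / r = ∫ (A'' + A' / r + (B - A) / r ^ 2)`. The left side is `-2π Hφ'(0)`; the right side
is half the weighted integral of the X-ray transform of `Δψ` through the origin, by Fubini.
-/

open MeasureTheory Real Filter

noncomputable section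

/-- Directional derivative of a function on `ℝ²` in the direction `v`. -/
def pd (v : ℝ × ℝ) (ψ : ℝ × ℝ → ℝ) : ℝ × ℝ → ℝ := fun p => fderiv ℝ ψ p v

/-- The Laplacian `Δ = ∂_{x₁}² + ∂_{x₂}²` on `ℝ²`. -/
def lap (ψ : ℝ × ℝ → ℝ) : ℝ × ℝ → ℝ := fun p =>
  pd (1, 0) (pd (1, 0) ψ) p + pd (0, 1) (pd (0, 1) ψ) p

/-- The X-ray transform `Tψ(s,θ)`. -/
def xray (ψ : ℝ × ℝ → ℝ) (s θ : ℝ) : ℝ :=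
  ∫ t : ℝ, ψ (t * Real.cos θ - s * Real.sin θ, t * Real.sin θ + s * Real.cos θ)

open Function Topology

theorem hasDerivAt_intervalIntegral_of_continuous {𝕜 E : Type*} [RCLike 𝕜]
    [NormedAddCommGroup E] [NormedSpace ℝ E] [NormedSpace 𝕜 E] {F F' : 𝕜 → ℝ → E}
    (hF : ∀ x, Continuous (F x)) (hF' : Continuous (uncurry F'))
    (hderiv : ∀ x t, HasDerivAt (fun x => F x t) (F' x t) x) (a b : ℝ) (x₀ : 𝕜) :
    HasDerivAt (fun x => ∫ t in a..b, F x t) (∫ t in a..b, F' x₀ t) x₀ := by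
  obtain ⟨C, hC⟩ := ((isCompact_closedBall x₀ 1).prod (isCompact_uIcc (a := a) (b := b))
    ).exists_bound_of_continuousOn hF'.continuousOn
  refine (intervalIntegral.hasDerivAt_integral_of_dominated_loc_of_deriv_le
    (bound := fun _ => C) (Metric.closedBall_mem_nhds x₀ one_pos)
    (Eventually.of_forall fun x => (hF x).aestronglyMeasurable) ((hF x₀).intervalIntegrable a b)
    (hF'.uncurry_left x₀).aestronglyMeasurable ?_ intervalIntegrable_const ?_).2
  · exact Eventually.of_forall fun t ht x hx => hC (x, t) ⟨hx, Set.uIoc_subset_uIcc ht⟩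
  · exact Eventually.of_forall fun t _ x _ => hderiv x t

theorem integral_sin_mul_deriv_deriv {u u' u'' : ℝ → ℝ} (hu : ∀ θ, HasDerivAt u (u' θ) θ)
    (hu' : ∀ θ, HasDerivAt u' (u'' θ) θ) (hu'' : Continuous u'') :
    ∫ θ in (0 : ℝ)..π, sin θ * u'' θ = u 0 + u π - ∫ θ in (0 : ℝ)..π, sin θ * u θ := by
  have huc : Continuous u := continuous_iff_continuousAt.2 fun θ => (hu θ).continuousAt
  have hprim (θ : ℝ) : HasDerivAt (fun θ => sin θ * u' θ - cos θ * u θ)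
      (sin θ * u'' θ + sin θ * u θ) θ :=
    (((hasDerivAt_sin θ).mul (hu' θ)).sub ((hasDerivAt_cos θ).mul (hu θ))).congr_deriv (by ring)
  have hFTC := intervalIntegral.integral_eq_sub_of_hasDerivAt (fun θ _ => hprim θ)
    ((by fun_prop : Continuous fun θ => sin θ * u'' θ + sin θ * u θ).intervalIntegrable 0 π)
  rw [intervalIntegral.integral_add (Continuous.intervalIntegrable (by fun_prop) _ _)
    (Continuous.intervalIntegrable (by fun_prop) _ _)] at hFTC
  simp only [sin_pi, cos_pi, sin_zero, cos_zero] at hFTC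
  linarith

section PuncturedLine

theorem measurableSet_le_abs (ε : ℝ) : MeasurableSet {t : ℝ | ε ≤ |t|} :=
  measurableSet_le measurable_const continuous_abs.measurable

theorem setOf_le_abs_eq (ε : ℝ) : {t : ℝ | ε ≤ |t|} = Set.Iic (-ε) ∪ Set.Ici ε := by
  ext t
  simp only [Set.mem_ofPred_eq, Set.mem_union, Set.mem_Iic, Set.mem_Ici, le_abs, le_neg, or_comm]

theorem aecover_le_abs : AECover volume (𝓝[>] 0) fun ε : ℝ => {t : ℝ | ε ≤ |t|} where
  ae_eventually_mem := by
    filter_upwards [Measure.ae_ne volume (0 : ℝ)] with t ht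
    exact mem_nhdsWithin_of_mem_nhds (Iic_mem_nhds (abs_pos.2 ht))
  measurableSet := measurableSet_le_abs

theorem integrableOn_div_le_abs {g : ℝ → ℝ} (hg : Integrable g) {ε : ℝ} (hε : 0 < ε) :
    IntegrableOn (fun t => g t / t) {t : ℝ | ε ≤ |t|} := by
  simp only [div_eq_mul_inv]
  refine hg.integrableOn.mul_bdd (c := ε⁻¹) measurable_inv.aestronglyMeasurable ?_
  filter_upwards [ae_restrict_mem (measurableSet_le_abs ε)] with t ht
  rw [norm_inv, Real.norm_eq_abs]
  exact inv_anti₀ hε ht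

theorem setIntegral_le_abs_comp_neg {E : Type*} [NormedAddCommGroup E] [NormedSpace ℝ E]
    (g : ℝ → E) (ε : ℝ) :
    ∫ t in {t : ℝ | ε ≤ |t|}, g (-t) = ∫ t in {t : ℝ | ε ≤ |t|}, g t := by
  simpa using (Measure.measurePreserving_neg (volume : Measure ℝ)).setIntegral_preimage_emb
    (Homeomorph.neg ℝ).measurableEmbedding g {t : ℝ | ε ≤ |t|}

theorem setIntegral_le_abs_of_hasDerivAt {E : Type*} [NormedAddCommGroup E] [NormedSpace ℝ E]
    [CompleteSpace E] {W W' : ℝ → E} {ε : ℝ} (hε : 0 < ε)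
    (hderiv : ∀ t ≠ 0, HasDerivAt W (W' t) t) (hint : IntegrableOn W' {t : ℝ | ε ≤ |t|})
    (hW : Tendsto W (cocompact ℝ) (𝓝 0)) :
    ∫ t in {t : ℝ | ε ≤ |t|}, W' t = W (-ε) - W ε := by
  rw [setOf_le_abs_eq] at hint ⊢
  have hdisj : Disjoint (Set.Iic (-ε)) (Set.Ici ε) :=
    Set.Iic_disjoint_Ici.2 (by linarith)
  rw [setIntegral_union hdisj measurableSet_Ici hint.left_of_union hint.right_of_union,
    integral_Iic_of_hasDerivAt_of_tendsto' (fun t ht => hderiv t ?_) hint.left_of_union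
      (hW.mono_left atBot_le_cocompact),
    integral_Ici_eq_integral_Ioi, integral_Ioi_of_hasDerivAt_of_tendsto'
      (fun t ht => hderiv t ?_) (hint.right_of_union.mono_set Set.Ioi_subset_Ici_self)
      (hW.mono_left atTop_le_cocompact)]
  · abel
  · exact (hε.trans_le ht).ne'
  · exact (lt_of_le_of_lt ht (neg_neg_of_pos hε)).ne

theorem tendsto_setIntegral_le_abs_of_hasDerivAt {E : Type*} [NormedAddCommGroup E]
    [NormedSpace ℝ E] [CompleteSpace E] {W W' : ℝ → E} {L : E}
    (hderiv : ∀ t ≠ 0, HasDerivAt W (W' t) t)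
    (hint : ∀ ε > 0, IntegrableOn W' {t : ℝ | ε ≤ |t|})
    (hW : Tendsto W (cocompact ℝ) (𝓝 0)) (hL : Tendsto W (𝓝[≠] 0) (𝓝 L)) :
    Tendsto (fun ε => ∫ t in {t : ℝ | ε ≤ |t|}, W' t) (𝓝[>] 0) (𝓝 0) := by
  have hright : Tendsto W (𝓝[>] 0) (𝓝 L) := hL.mono_left (nhdsGT_le_nhdsNE 0)
  have hleft : Tendsto (fun ε => W (-ε)) (𝓝[>] 0) (𝓝 L) :=
    (hL.mono_left (nhdsLT_le_nhdsNE 0)).comp (by simpa using tendsto_neg_nhdsGT (a := (0 : ℝ)))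
  refine (sub_self L ▸ hleft.sub hright).congr' ?_
  filter_upwards [self_mem_nhdsWithin] with ε hε
  exact (setIntegral_le_abs_of_hasDerivAt hε hderiv (hint ε hε) hW).symm

theorem setIntegral_le_abs_comp_neg_div {g : ℝ → ℝ} (hg : Integrable g) {ε : ℝ} (hε : 0 < ε) :
    ∫ t in {t : ℝ | ε ≤ |t|}, g (-t) / t =
      -(1 / 2) * ∫ t in {t : ℝ | ε ≤ |t|}, (g t - g (-t)) / t := by
  have hreflect : ∫ t in {t : ℝ | ε ≤ |t|}, g (-t) / t = -∫ t in {t : ℝ | ε ≤ |t|}, g t / t := by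
    rw [← setIntegral_le_abs_comp_neg fun t => g t / t, ← integral_neg]
    simp only [div_neg, neg_neg]
  simp only [sub_div]
  rw [integral_sub (integrableOn_div_le_abs hg hε) (integrableOn_div_le_abs hg.comp_neg hε),
    hreflect]
  ring

theorem setIntegral_le_abs_deriv_comp_neg_div {φ : ℝ → ℝ} (hφ : ContDiff ℝ 1 φ)
    (hφc : HasCompactSupport φ) {ε : ℝ} (hε : 0 < ε) :
    ∫ t in {t : ℝ | ε ≤ |t|}, deriv φ (-t) / t =
      -(1 / 2) * ∫ t in {t : ℝ | ε ≤ |t|}, deriv (fun r => φ r + φ (-r)) t / t := by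
  have hφd : Differentiable ℝ φ := hφ.differentiable one_ne_zero
  have hsum (t : ℝ) : deriv (fun r => φ r + φ (-r)) t = deriv φ t - deriv φ (-t) := by
    rw [deriv_fun_add (hφd t) (by fun_prop), deriv_comp_neg, sub_eq_add_neg]
  simp only [hsum]
  exact setIntegral_le_abs_comp_neg_div
    ((hφ.continuous_deriv le_rfl).integrable_of_hasCompactSupport hφc.deriv) hε

end PuncturedLine

section RadialODE

variable {A B f : ℝ → ℝ}

/-- The boundary term of the radial integration by parts:
`A'' + A' / r + (B - A) / r ^ 2 = (boundaryTerm A B)' + B' / r`. -/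
def boundaryTerm (A B : ℝ → ℝ) (r : ℝ) : ℝ :=
  deriv A r + (A r - B r) / r

theorem hasDerivAt_boundaryTerm {r : ℝ} (hr : r ≠ 0) (hA : DifferentiableAt ℝ A r)
    (hA' : DifferentiableAt ℝ (deriv A) r) (hB : DifferentiableAt ℝ B r)
    (hf : r ^ 2 * f r = r ^ 2 * deriv (deriv A) r + r * deriv A r - A r + B r) :
    HasDerivAt (boundaryTerm A B) (f r - deriv B r / r) r := by
  refine (hA'.hasDerivAt.add ((hA.hasDerivAt.sub hB.hasDerivAt).div (hasDerivAt_id r) hr)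
    ).congr_deriv ?_
  simp only [id, Pi.sub_apply]
  field_simp
  linarith

theorem tendsto_boundaryTerm (hA : DifferentiableAt ℝ A 0) (hA' : ContinuousAt (deriv A) 0)
    (hB : DifferentiableAt ℝ B 0) (h0 : A 0 = B 0) :
    Tendsto (boundaryTerm A B) (𝓝[≠] 0) (𝓝 (deriv A 0 + (deriv A 0 - deriv B 0))) := by
  have hslope := (hA.hasDerivAt.sub hB.hasDerivAt).tendsto_slope_zero
  refine ((hA'.tendsto.mono_left nhdsWithin_le_nhds).add hslope).congr fun r => ?_
  simp [boundaryTerm, h0, div_eq_inv_mul]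

theorem hasCompactSupport_boundaryTerm (hA : HasCompactSupport A) (hB : HasCompactSupport B) :
    HasCompactSupport (boundaryTerm A B) :=
  hA.deriv.add ((hA.sub hB).mul_right (f' := fun r => r⁻¹))

theorem tendsto_setIntegral_deriv_div (hA : Differentiable ℝ A) (hA' : Differentiable ℝ (deriv A))
    (hAc : HasCompactSupport A) (hB : ContDiff ℝ 1 B) (hBc : HasCompactSupport B)
    (h0 : A 0 = B 0) (hfint : Integrable f)
    (hf : ∀ r, r ^ 2 * f r = r ^ 2 * deriv (deriv A) r + r * deriv A r - A r + B r) :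
    Tendsto (fun ε => ∫ t in {t : ℝ | ε ≤ |t|}, deriv B t / t) (𝓝[>] 0) (𝓝 (∫ t, f t)) := by
  have hB' : Integrable (deriv B) :=
    (hB.continuous_deriv le_rfl).integrable_of_hasCompactSupport hBc.deriv
  have hBd : Differentiable ℝ B := hB.differentiable one_ne_zero
  have hW : Tendsto (fun ε => ∫ t in {t : ℝ | ε ≤ |t|}, (f t - deriv B t / t)) (𝓝[>] 0) (𝓝 0) :=
    tendsto_setIntegral_le_abs_of_hasDerivAt
      (fun r hr => hasDerivAt_boundaryTerm hr (hA r) (hA' r) (hBd r) (hf r))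
      (fun ε hε => hfint.integrableOn.sub (integrableOn_div_le_abs hB' hε))
      (hasCompactSupport_boundaryTerm hAc hBc).is_zero_at_infty
      (tendsto_boundaryTerm (hA 0) (hA' 0).continuousAt (hBd 0) h0)
  have hF := aecover_le_abs.integral_tendsto_of_countably_generated hfint
  refine (sub_zero (∫ t, f t) ▸ hF.sub hW).congr' ?_
  filter_upwards [self_mem_nhdsWithin] with ε hε
  rw [integral_sub hfint.integrableOn (integrableOn_div_le_abs hB' hε), sub_sub_cancel]

end RadialODE

section Plane

variable {ψ : ℝ × ℝ → ℝ}

theorem contDiff_pd {n : WithTop ℕ∞} (hψ : ContDiff ℝ (n + 1) ψ) (v : ℝ × ℝ) :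
    ContDiff ℝ n (pd v ψ) :=
  (hψ.fderiv_right le_rfl).clm_apply contDiff_const

theorem continuous_lap (hψ : ContDiff ℝ 2 ψ) : Continuous (lap ψ) :=
  have h (v : ℝ × ℝ) : Continuous (pd v (pd v ψ)) :=
    (contDiff_pd (n := 0) (contDiff_pd (n := 1) hψ v) v).continuous
  (h (1, 0)).add (h (0, 1))

theorem hasCompactSupport_lap (hψ : HasCompactSupport ψ) : HasCompactSupport (lap ψ) :=
  have h (v : ℝ × ℝ) : HasCompactSupport (pd v (pd v ψ)) :=
    (hψ.fderiv_apply ℝ v).fderiv_apply ℝ v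
  (h (1, 0)).add (h (0, 1))

theorem differentiable_fderiv (hψ : ContDiff ℝ 2 ψ) : Differentiable ℝ (fderiv ℝ ψ) :=
  (hψ.fderiv_right (m := 1) le_rfl).differentiable one_ne_zero

theorem pd_smul (c : ℝ) (v : ℝ × ℝ) (ψ : ℝ × ℝ → ℝ) (p : ℝ × ℝ) :
    pd (c • v) ψ p = c * pd v ψ p :=
  map_smul _ c v

theorem hasDerivAt_comp_curve {γ : ℝ → ℝ × ℝ} {γ' : ℝ × ℝ} {t : ℝ}
    (hψ : DifferentiableAt ℝ ψ (γ t)) (hγ : HasDerivAt γ γ' t) :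
    HasDerivAt (fun t => ψ (γ t)) (pd γ' ψ (γ t)) t :=
  hψ.hasFDerivAt.comp_hasDerivAt t hγ

theorem pd_pd {p : ℝ × ℝ} (hψ : DifferentiableAt ℝ (fderiv ℝ ψ) p) (v w : ℝ × ℝ) :
    pd v (pd w ψ) p = fderiv ℝ (fderiv ℝ ψ) p v w := by
  unfold pd
  rw [fderiv_clm_apply hψ (differentiableAt_const w)]
  simp

theorem hasDerivAt_pd_comp_curve {γ v : ℝ → ℝ × ℝ} {γ' v' : ℝ × ℝ} {t : ℝ}
    (hψ : DifferentiableAt ℝ (fderiv ℝ ψ) (γ t)) (hγ : HasDerivAt γ γ' t)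
    (hv : HasDerivAt v v' t) :
    HasDerivAt (fun t => pd (v t) ψ (γ t)) (pd γ' (pd (v t) ψ) (γ t) + pd v' ψ (γ t)) t :=
  pd_pd hψ γ' (v t) ▸ (hψ.hasFDerivAt.comp_hasDerivAt t hγ).clm_apply hv

theorem continuous_pd_comp {X : Type*} [TopologicalSpace X] {γ v : X → ℝ × ℝ}
    (hψ : ContDiff ℝ 1 ψ) (hγ : Continuous γ) (hv : Continuous v) :
    Continuous fun x => pd (v x) ψ (γ x) :=
  ((hψ.continuous_fderiv one_ne_zero).comp hγ).clm_apply hv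

theorem continuous_pd_pd_comp {X : Type*} [TopologicalSpace X] {γ v w : X → ℝ × ℝ}
    (hψ : ContDiff ℝ 2 ψ) (hγ : Continuous γ) (hv : Continuous v) (hw : Continuous w) :
    Continuous fun x => pd (v x) (pd (w x) ψ) (γ x) := by
  simp only [pd_pd (differentiable_fderiv hψ _)]
  exact ((((hψ.fderiv_right (m := 1) le_rfl).continuous_fderiv one_ne_zero).comp hγ).clm_apply
    hv).clm_apply hw

end Plane

section PolarCoordinates

variable {ψ f : ℝ × ℝ → ℝ}

/-- The unit vector `e_θ = (cos θ, sin θ)`; polar coordinates are `(r, θ) ↦ r • radialDir θ`. -/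
def radialDir (θ : ℝ) : ℝ × ℝ := (cos θ, sin θ)

/-- The unit vector `(-sin θ, cos θ)`, the derivative of `radialDir`. -/
def angularDir (θ : ℝ) : ℝ × ℝ := (-sin θ, cos θ)

theorem hasDerivAt_radialDir (θ : ℝ) : HasDerivAt radialDir (angularDir θ) θ :=
  (hasDerivAt_cos θ).prodMk (hasDerivAt_sin θ)

theorem hasDerivAt_angularDir (θ : ℝ) : HasDerivAt angularDir (-radialDir θ) θ :=
  (hasDerivAt_sin θ).neg.prodMk (hasDerivAt_cos θ)

theorem hasDerivAt_smul_radialDir (r θ : ℝ) :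
    HasDerivAt (fun r => r • radialDir θ) (radialDir θ) r := by
  simpa using (hasDerivAt_id r).smul_const (radialDir θ)

@[fun_prop]
theorem continuous_radialDir : Continuous radialDir := by
  unfold radialDir
  fun_prop

@[fun_prop]
theorem continuous_angularDir : Continuous angularDir := by
  unfold angularDir
  fun_prop

theorem lap_eq_pd_radialDir_add_pd_angularDir {p : ℝ × ℝ}
    (hψ : DifferentiableAt ℝ (fderiv ℝ ψ) p) (θ : ℝ) :
    lap ψ p = pd (radialDir θ) (pd (radialDir θ) ψ) p +
      pd (angularDir θ) (pd (angularDir θ) ψ) p := by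
  have hradial : radialDir θ = cos θ • ((1, 0) : ℝ × ℝ) + sin θ • (0, 1) := by simp [radialDir]
  have hangular : angularDir θ = -sin θ • ((1, 0) : ℝ × ℝ) + cos θ • (0, 1) := by
    simp [angularDir]
  simp only [lap, pd_pd hψ, hradial, hangular, map_add, map_smul, add_apply,
    smul_apply, smul_eq_mul]
  linear_combination (-(fderiv ℝ (fderiv ℝ ψ) p (1, 0) (1, 0)) -
    fderiv ℝ (fderiv ℝ ψ) p (0, 1) (0, 1)) * sin_sq_add_cos_sq θ

theorem abs_le_two_mul_norm_smul_radialDir (t θ : ℝ) : |t| ≤ 2 * ‖t • radialDir θ‖ := by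
  have hcos : |t * cos θ| ≤ ‖t • radialDir θ‖ := norm_fst_le (t • radialDir θ)
  have hsin : |t * sin θ| ≤ ‖t • radialDir θ‖ := norm_snd_le (t • radialDir θ)
  refine abs_le_of_sq_le_sq ?_ (by positivity)
  have hcos_sq : (t * cos θ) ^ 2 ≤ ‖t • radialDir θ‖ ^ 2 := sq_le_sq.2 (by simpa using hcos)
  have hsin_sq : (t * sin θ) ^ 2 ≤ ‖t • radialDir θ‖ ^ 2 := sq_le_sq.2 (by simpa using hsin)
  nlinarith [sin_sq_add_cos_sq θ]

theorem exists_forall_smul_radialDir_eq_zero (hf : HasCompactSupport f) :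
    ∃ R : ℝ, ∀ t θ : ℝ, R < |t| → f (t • radialDir θ) = 0 := by
  obtain ⟨C, hC⟩ := hf.isCompact.isBounded.exists_norm_le
  refine ⟨2 * C, fun t θ ht => ?_⟩
  by_contra hne
  linarith [hC _ (subset_tsupport f hne), abs_le_two_mul_norm_smul_radialDir t θ]

theorem integrable_smul_radialDir (hf : Continuous f) (hfc : HasCompactSupport f) (a b : ℝ) :
    Integrable (fun p : ℝ × ℝ => f (p.2 • radialDir p.1))
      ((volume.restrict (Set.uIoc a b)).prod volume) := by
  obtain ⟨R, hR⟩ := exists_forall_smul_radialDir_eq_zero hfc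
  have hK : IntegrableOn (fun p : ℝ × ℝ => f (p.2 • radialDir p.1))
      (Set.uIcc a b ×ˢ Set.Icc (-R) R) :=
    ContinuousOn.integrableOn_compact (isCompact_uIcc.prod isCompact_Icc) (by fun_prop)
  rw [Measure.restrict_prod_eq_prod_univ, ← Measure.volume_eq_prod]
  refine hK.of_forall_sdiff_eq_zero (measurableSet_uIoc.prod MeasurableSet.univ)
    fun p hp => hR _ _ ?_
  by_contra! hle
  exact hp.2 ⟨Set.uIoc_subset_uIcc hp.1.1, abs_le.1 hle⟩

end PolarCoordinates

section SinMean

variable {ψ f : ℝ × ℝ → ℝ}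

/-- The integral of `f`, weighted by `sin θ`, over the upper half of the circle of radius `r`, or
over its lower half if `r < 0`. -/
def sinMean (f : ℝ × ℝ → ℝ) (r : ℝ) : ℝ :=
  ∫ θ in (0 : ℝ)..π, sin θ * f (r • radialDir θ)

theorem sinMean_zero (f : ℝ × ℝ → ℝ) : sinMean f 0 = 2 * f 0 := by
  simp only [sinMean, zero_smul, intervalIntegral.integral_mul_const, integral_sin, cos_zero,
    cos_pi]
  norm_num

theorem continuous_sinMean (hf : Continuous f) : Continuous (sinMean f) :=
  intervalIntegral.continuous_parametric_intervalIntegral_of_continuous'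
    (f := fun r θ => sin θ * f (r • radialDir θ)) (by unfold uncurry; fun_prop) 0 π

theorem hasCompactSupport_sinMean (hf : HasCompactSupport f) : HasCompactSupport (sinMean f) := by
  obtain ⟨R, hR⟩ := exists_forall_smul_radialDir_eq_zero hf
  refine HasCompactSupport.intro (isCompact_Icc (a := -R) (b := R)) fun r hr => ?_
  have hRr : R < |r| := by
    by_contra! hle
    exact hr (abs_le.1 hle)
  simp [sinMean, hR r _ hRr]

theorem hasDerivAt_sinMean (hψ : ContDiff ℝ 1 ψ) (r : ℝ) :
    HasDerivAt (sinMean ψ)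
      (∫ θ in (0 : ℝ)..π, sin θ * pd (radialDir θ) ψ (r • radialDir θ)) r := by
  have hψ₀ := hψ.continuous
  exact hasDerivAt_intervalIntegral_of_continuous (fun r => by fun_prop)
    (F' := fun r θ => sin θ * pd (radialDir θ) ψ (r • radialDir θ))
    ((by fun_prop : Continuous fun p : ℝ × ℝ => sin p.2).mul
      (continuous_pd_comp hψ (by fun_prop) (by fun_prop)))
    (fun r θ => (hasDerivAt_comp_curve (hψ.differentiable one_ne_zero _)
      (hasDerivAt_smul_radialDir r θ)).const_mul (sin θ)) 0 π r

theorem hasDerivAt_deriv_sinMean (hψ : ContDiff ℝ 2 ψ) (r : ℝ) :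
    HasDerivAt (deriv (sinMean ψ))
      (∫ θ in (0 : ℝ)..π, sin θ * pd (radialDir θ) (pd (radialDir θ) ψ) (r • radialDir θ)) r := by
  have hψ₁ : ContDiff ℝ 1 ψ := hψ.of_le one_le_two
  rw [funext fun r => (hasDerivAt_sinMean hψ₁ r).deriv]
  refine hasDerivAt_intervalIntegral_of_continuous
    (fun r => continuous_sin.mul (continuous_pd_comp hψ₁ (by fun_prop) (by fun_prop)))
    (F' := fun r θ => sin θ * pd (radialDir θ) (pd (radialDir θ) ψ) (r • radialDir θ))
    ((by fun_prop : Continuous fun p : ℝ × ℝ => sin p.2).mul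
      (continuous_pd_pd_comp hψ (by fun_prop) (by fun_prop) (by fun_prop)))
    (fun r θ => ?_) 0 π r
  exact (hasDerivAt_comp_curve ((contDiff_pd (n := 1) hψ _).differentiable one_ne_zero _)
    (hasDerivAt_smul_radialDir r θ)).const_mul (sin θ)

theorem integral_sin_mul_angular (hψ : ContDiff ℝ 2 ψ) (r : ℝ) :
    ∫ θ in (0 : ℝ)..π, sin θ * (r ^ 2 * pd (angularDir θ) (pd (angularDir θ) ψ) (r • radialDir θ) -
      r * pd (radialDir θ) ψ (r • radialDir θ)) = ψ (r, 0) + ψ (-r, 0) - sinMean ψ r := by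
  have hcircle (θ : ℝ) : HasDerivAt (fun θ => r • radialDir θ) (r • angularDir θ) θ :=
    (hasDerivAt_radialDir θ).const_smul r
  have hderiv (θ : ℝ) : HasDerivAt (fun θ => ψ (r • radialDir θ))
      (r * pd (angularDir θ) ψ (r • radialDir θ)) θ := by
    rw [← pd_smul]
    exact hasDerivAt_comp_curve (hψ.differentiable two_ne_zero _) (hcircle θ)
  have hderiv₂ (θ : ℝ) : HasDerivAt (fun θ => r * pd (angularDir θ) ψ (r • radialDir θ))
      (r ^ 2 * pd (angularDir θ) (pd (angularDir θ) ψ) (r • radialDir θ) -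
        r * pd (radialDir θ) ψ (r • radialDir θ)) θ := by
    refine ((hasDerivAt_pd_comp_curve (differentiable_fderiv hψ _) (hcircle θ)
      (hasDerivAt_angularDir θ)).const_mul r).congr_deriv ?_
    rw [pd_smul, ← neg_one_smul ℝ, pd_smul]
    ring
  have hcont : Continuous fun θ =>
      r ^ 2 * pd (angularDir θ) (pd (angularDir θ) ψ) (r • radialDir θ) -
        r * pd (radialDir θ) ψ (r • radialDir θ) :=
    (continuous_const.mul (continuous_pd_pd_comp hψ (by fun_prop) (by fun_prop)
      (by fun_prop))).sub (continuous_const.mul (continuous_pd_comp (hψ.of_le one_le_two)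
      (by fun_prop) (by fun_prop)))
  simpa [radialDir, sinMean] using integral_sin_mul_deriv_deriv hderiv hderiv₂ hcont

theorem sq_mul_sinMean_lap (hψ : ContDiff ℝ 2 ψ) (r : ℝ) :
    r ^ 2 * sinMean (lap ψ) r = r ^ 2 * deriv (deriv (sinMean ψ)) r + r * deriv (sinMean ψ) r -
      sinMean ψ r + (ψ (r, 0) + ψ (-r, 0)) := by
  have hψ₁ : ContDiff ℝ 1 ψ := hψ.of_le one_le_two
  have hP₁ : Continuous fun θ => pd (radialDir θ) ψ (r • radialDir θ) :=
    continuous_pd_comp hψ₁ (by fun_prop) (by fun_prop)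
  have hP₂ : Continuous fun θ => pd (radialDir θ) (pd (radialDir θ) ψ) (r • radialDir θ) :=
    continuous_pd_pd_comp hψ (by fun_prop) (by fun_prop) (by fun_prop)
  have hQ₂ : Continuous fun θ => pd (angularDir θ) (pd (angularDir θ) ψ) (r • radialDir θ) :=
    continuous_pd_pd_comp hψ (by fun_prop) (by fun_prop) (by fun_prop)
  calc r ^ 2 * sinMean (lap ψ) r
      = ∫ θ in (0 : ℝ)..π,
          (r ^ 2 * (sin θ * pd (radialDir θ) (pd (radialDir θ) ψ) (r • radialDir θ)) +
          r * (sin θ * pd (radialDir θ) ψ (r • radialDir θ)) +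
          sin θ * (r ^ 2 * pd (angularDir θ) (pd (angularDir θ) ψ) (r • radialDir θ) -
            r * pd (radialDir θ) ψ (r • radialDir θ))) := by
        rw [sinMean, ← intervalIntegral.integral_const_mul]
        refine intervalIntegral.integral_congr fun θ _ => ?_
        rw [lap_eq_pd_radialDir_add_pd_angularDir (differentiable_fderiv hψ _) θ]
        ring
    _ = r ^ 2 * deriv (deriv (sinMean ψ)) r + r * deriv (sinMean ψ) r +
          (ψ (r, 0) + ψ (-r, 0) - sinMean ψ r) := by
        rw [intervalIntegral.integral_add (Continuous.intervalIntegrable (by fun_prop) _ _)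
          (Continuous.intervalIntegrable (by fun_prop) _ _), intervalIntegral.integral_add
          (Continuous.intervalIntegrable (by fun_prop) _ _)
          (Continuous.intervalIntegrable (by fun_prop) _ _), integral_sin_mul_angular hψ,
          intervalIntegral.integral_const_mul, intervalIntegral.integral_const_mul,
          (hasDerivAt_deriv_sinMean hψ r).deriv, (hasDerivAt_sinMean hψ₁ r).deriv]
    _ = _ := by ring

theorem xray_zero_left (f : ℝ × ℝ → ℝ) (θ : ℝ) : xray f 0 θ = ∫ t : ℝ, f (t • radialDir θ) := by
  simp [xray, radialDir]

theorem xray_zero_periodic (f : ℝ × ℝ → ℝ) : Periodic (xray f 0) π := by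
  intro θ
  have hneg (t : ℝ) : t • radialDir (θ + π) = -t • radialDir θ := by simp [radialDir]
  simp only [xray_zero_left, hneg]
  exact integral_neg_eq_self (fun t => f (t • radialDir θ)) volume

theorem intervalIntegrable_xray_zero (hf : Continuous f) (hfc : HasCompactSupport f) (a b : ℝ) :
    IntervalIntegrable (xray f 0) volume a b := by
  rw [intervalIntegrable_iff, funext (xray_zero_left f)]
  exact (integrable_smul_radialDir hf hfc a b).integral_prod_left

theorem integral_sin_mul_xray_zero (hf : Continuous f) (hfc : HasCompactSupport f) :
    ∫ θ in (0 : ℝ)..π, sin θ * xray f 0 θ = ∫ r, sinMean f r := by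
  unfold sinMean
  rw [← intervalIntegral_integral_swap]
  · simp only [xray_zero_left, integral_const_mul]
  · have hsin : Continuous fun p : ℝ × ℝ => sin p.1 := by fun_prop
    have hint : Integrable (fun p : ℝ × ℝ => sin p.1 * f (p.2 • radialDir p.1))
        ((volume.restrict (Set.uIoc 0 π)).prod volume) :=
      (integrable_smul_radialDir hf hfc 0 π).bdd_mul hsin.aestronglyMeasurable
        (Eventually.of_forall fun p => abs_sin_le_one p.1)
    exact hint

theorem integral_abs_sin_mul_xray_zero (hf : Continuous f) (hfc : HasCompactSupport f) :
    ∫ θ in (0 : ℝ)..(2 * π), |sin θ| * xray f 0 θ = 2 * ∫ r, sinMean f r := by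
  have hperiodic : Periodic (fun θ => |sin θ| * xray f 0 θ) π := fun θ => by
    simp only [sin_add_pi, abs_neg, xray_zero_periodic f θ]
  have hint (a b : ℝ) : IntervalIntegrable (fun θ => |sin θ| * xray f 0 θ) volume a b :=
    (intervalIntegrable_xray_zero hf hfc a b).continuousOn_mul (by fun_prop)
  have hsin :
      ∫ θ in (0 : ℝ)..π, |sin θ| * xray f 0 θ = ∫ θ in (0 : ℝ)..π, sin θ * xray f 0 θ := by
    refine intervalIntegral.integral_congr fun θ hθ => ?_
    rw [Set.uIcc_of_le pi_pos.le] at hθ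
    simp only [abs_of_nonneg (sin_nonneg_of_mem_Icc hθ)]
  have htwo := hperiodic.intervalIntegral_add_zsmul_eq 2 0 hint
  simpa [hsin, integral_sin_mul_xray_zero hf hfc] using htwo

end SinMean

theorem hilbert_deriv_eq_xray_general (ψ : ℝ × ℝ → ℝ) (hψ : ContDiff ℝ 2 ψ)
    (hsupp : HasCompactSupport ψ) (φ : ℝ → ℝ) (hφ : ∀ x₁ : ℝ, φ x₁ = ψ (x₁, 0)) :
    Tendsto (fun ε : ℝ => (1 / π) * ∫ t in {t : ℝ | ε ≤ |t|}, deriv φ (-t) / t)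
      (nhdsWithin 0 (Set.Ioi 0))
      (nhds (-(1 / (4 * π)) * ∫ θ in (0:ℝ)..(2 * π), |Real.sin θ| * xray (lap ψ) 0 θ)) := by
  have hφ₁ : ContDiff ℝ 1 φ := funext hφ ▸ (hψ.of_le one_le_two).comp (by fun_prop)
  have hφc : HasCompactSupport φ := funext hφ ▸ hsupp.comp_isClosedEmbedding
    (LeftInverse.isClosedEmbedding (f := Prod.fst) (fun _ => rfl) (by fun_prop) (by fun_prop))
  have hlim : Tendsto (fun ε => ∫ t in {t : ℝ | ε ≤ |t|}, deriv (fun r => φ r + φ (-r)) t / t)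
      (𝓝[>] 0) (𝓝 (∫ r, sinMean (lap ψ) r)) :=
    tendsto_setIntegral_deriv_div
      (fun r => (hasDerivAt_sinMean (hψ.of_le one_le_two) r).differentiableAt)
      (fun r => (hasDerivAt_deriv_sinMean hψ r).differentiableAt)
      (hasCompactSupport_sinMean hsupp) (hφ₁.add (hφ₁.comp contDiff_neg))
      (hφc.add (hφc.comp_homeomorph (Homeomorph.neg ℝ)))
      (by simp [sinMean_zero, hφ, two_mul, ← Prod.zero_eq_mk])
      ((continuous_sinMean (continuous_lap hψ)).integrable_of_hasCompactSupport
        (hasCompactSupport_sinMean (hasCompactSupport_lap hsupp)))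
      (by simpa only [hφ] using sq_mul_sinMean_lap hψ)
  rw [integral_abs_sin_mul_xray_zero (continuous_lap hψ) (hasCompactSupport_lap hsupp)]
  have hconst (x : ℝ) : 1 / π * (-(1 / 2) * x) = -(1 / (4 * π)) * (2 * x) := by
    field_simp
    ring
  refine (hconst _ ▸ (hlim.const_mul (-(1 / 2))).const_mul (1 / π)).congr' ?_
  filter_upwards [self_mem_nhdsWithin] with ε hε
  rw [setIntegral_le_abs_deriv_comp_neg_div hφ₁ hφc hε]

/-- For `ψ ∈ C_c^∞(ℝ²)` and `φ(x₁) = ψ(x₁, 0)`, the derivative at `0` of the Hilbert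
transform of `φ`, i.e. the limit as `ε → 0⁺` of `(1/π) ∫_{|t| ≥ ε} φ'(−t)/t dt`, equals
`−(1/4π) ∫_{S¹} |sin θ| T(Δψ)(0,θ) dθ`. -/
theorem hilbert_deriv_eq_xray (ψ : ℝ × ℝ → ℝ) (hψ : ContDiff ℝ (⊤ : ℕ∞) ψ)
    (hsupp : HasCompactSupport ψ) (φ : ℝ → ℝ) (hφ : ∀ x₁ : ℝ, φ x₁ = ψ (x₁, 0)) :
    Tendsto (fun ε : ℝ => (1 / π) * ∫ t in {t : ℝ | ε ≤ |t|}, deriv φ (-t) / t)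
      (nhdsWithin 0 (Set.Ioi 0))
      (nhds (-(1 / (4 * π)) * ∫ θ in (0:ℝ)..(2 * π), |Real.sin θ| * xray (lap ψ) 0 θ)) :=
  hilbert_deriv_eq_xray_general ψ (contDiff_infty.1 hψ 2) hsupp φ hφ

end
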